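/- Let a > 0 and let ρ : [a,∞) → [0,∞) be measurable with ∫ₐ^∞ ρ(r) r² dr < ∞ and ∫ₐ^∞ ρ(r)^{6/5} r² dr < ∞. Set G(r) = ∫ₐ^r ρ(z) z² dz. Then ∫ₐ^∞ G(r) ρ(r) r dr = ½ ∫ₐ^∞ r^{−2} G(r)² dr, and moreover ∫ₐ^∞ G(r) ρ(r) r dr ≤ (2/3) (2π²)^{−2/3} (4π)^{2/3} (∫ₐ^∞ ρ(r)^{6/5} r² dr)^{5/3}. -/

import Mathlib

/-!
Let `f = -Φ`, so `f' = -G / r²`. Integrating the derivatives of `G² / r` and of `f G` over `(a, ∞)`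
gives `2 ∫ G ρ r = ∫ G² / r² = ∫ f ρ r²`. Hölder's inequality with exponents `6` and `6/5` bounds
the last integral by means of `∫ f⁶ r²`, which the sharp radial Sobolev inequality
`(27/256) π² ∫ f⁶ r² ≤ (∫ f'² r²)³` controls by `∫ G² / r²` again.

The Sobolev inequality is proved by calibration. Let `m` be the maximum of `v = r f²`, attained at
`r₀`. Completing the square, `f'² r² - f⁶ r² / (4 m²) ≥ ((ε √(1 - (v / m)²) - 1) / 2) v'` for
`ε = ±1`. The right-hand side is an exact derivative; with `ε = 1` on `(a, r₀)` and `ε = -1` on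
`(r₀, ∞)` its integral is at least `π m / 4`, the disc area entering through the primitive of the
square root. The arithmetic-geometric mean inequality then eliminates `m`.
-/

open Set MeasureTheory Filter

open scoped Topology

theorem tendsto_atTop_zero_of_nonneg_of_le_div {φ : ℝ → ℝ} {a C : ℝ}
    (h_nonneg : ∀ r, a ≤ r → 0 ≤ φ r) (h_le : ∀ r, a ≤ r → φ r ≤ C / r) :
    Tendsto φ atTop (𝓝 0) :=
  squeeze_zero' ((eventually_ge_atTop a).mono h_nonneg) ((eventually_ge_atTop a).mono h_le)
    (tendsto_const_nhds.div_atTop tendsto_id)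

theorem integrableOn_mul_of_continuousOn_of_abs_le {s : Set ℝ} (hs : MeasurableSet s)
    {φ g : ℝ → ℝ} {C : ℝ} (hφ : ContinuousOn φ s) (hC : ∀ r ∈ s, |φ r| ≤ C)
    (hg : IntegrableOn g s) : IntegrableOn (fun r => φ r * g r) s :=
  hg.bdd_mul (hφ.aestronglyMeasurable hs) (ae_restrict_of_forall_mem hs hC)

theorem integrableOn_Ioi_inv_sq {a : ℝ} (ha : 0 < a) :
    IntegrableOn (fun r : ℝ => (r ^ 2)⁻¹) (Ioi a) := by
  refine (integrableOn_Ioi_rpow_of_lt (a := -2) (by norm_num) ha).congr_fun (fun r hr => ?_)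
    measurableSet_Ioi
  simp [Real.rpow_neg (ha.trans hr).le]

theorem integral_Ioi_inv_sq {a : ℝ} (ha : 0 < a) : ∫ r in Ioi a, (r ^ 2)⁻¹ = a⁻¹ := by
  have h_rpow : EqOn (fun r : ℝ => (r ^ 2)⁻¹) (fun r => r ^ (-2 : ℝ)) (Ioi a) := fun r hr => by
    simp [Real.rpow_neg (ha.trans hr).le]
  rw [setIntegral_congr_fun measurableSet_Ioi h_rpow, integral_Ioi_rpow_of_lt (by norm_num) ha]
  norm_num [Real.rpow_neg_one]

theorem integral_Ioi_of_absolutelyContinuousOnInterval {F F' : ℝ → ℝ} {a L : ℝ}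
    (hF : ∀ b, a ≤ b → AbsolutelyContinuousOnInterval F a b)
    (hF' : ∀ᵐ x, a < x → HasDerivAt F (F' x) x) (hint : IntegrableOn F' (Ioi a))
    (hlim : Tendsto F atTop (𝓝 L)) : ∫ x in Ioi a, F' x = L - F a := by
  refine tendsto_nhds_unique (intervalIntegral_tendsto_integral_Ioi a hint tendsto_id) ?_
  refine (hlim.sub_const (F a)).congr' ?_
  filter_upwards [eventually_ge_atTop a] with b hab
  rw [id, ← (hF b hab).integral_deriv_eq_sub]
  refine intervalIntegral.integral_congr_ae ?_
  filter_upwards [hF'] with x hx hxab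
  rw [uIoc_of_le hab] at hxab
  exact (hx hxab.1).deriv

section WeightedHolder

variable {α : Type*} [MeasurableSpace α] {μ : Measure α} {p q : ℝ} {f g ω : α → ℝ}

theorem mul_rpow_one_div_rpow {x y : ℝ} (hp : p ≠ 0) (hx : 0 ≤ x) (hy : 0 ≤ y) :
    (x * y ^ (1 / p)) ^ p = x ^ p * y := by
  rw [Real.mul_rpow hx (Real.rpow_nonneg hy _), ← Real.rpow_mul hy, one_div_mul_cancel hp,
    Real.rpow_one]

theorem memLp_mul_rpow_one_div (hp : 0 < p) (hf : AEStronglyMeasurable f μ)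
    (hω : AEStronglyMeasurable ω μ) (hf0 : 0 ≤ᵐ[μ] f) (hω0 : 0 ≤ᵐ[μ] ω)
    (hfp : Integrable (fun x => f x ^ p * ω x) μ) :
    MemLp (fun x => f x * ω x ^ (1 / p)) (ENNReal.ofReal p) μ := by
  have hmeas : AEStronglyMeasurable (fun x => f x * ω x ^ (1 / p)) μ :=
    hf.mul (hω.aemeasurable.pow_const _).aestronglyMeasurable
  rw [← integrable_norm_rpow_iff hmeas (by simpa using hp) ENNReal.ofReal_ne_top,
    ENNReal.toReal_ofReal hp.le]
  refine hfp.congr ?_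
  filter_upwards [hf0, hω0] with x hfx hωx
  rw [Real.norm_of_nonneg (mul_nonneg hfx (Real.rpow_nonneg hωx _)),
    mul_rpow_one_div_rpow hp.ne' hfx hωx]

theorem integral_mul_mul_weight_le_rpow_mul_rpow (hpq : p.HolderConjugate q)
    (hf : AEStronglyMeasurable f μ) (hg : AEStronglyMeasurable g μ)
    (hω : AEStronglyMeasurable ω μ) (hf0 : 0 ≤ᵐ[μ] f) (hg0 : 0 ≤ᵐ[μ] g) (hω0 : 0 ≤ᵐ[μ] ω)
    (hfp : Integrable (fun x => f x ^ p * ω x) μ) (hgq : Integrable (fun x => g x ^ q * ω x) μ) :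
    ∫ x, f x * g x * ω x ∂μ ≤
      (∫ x, f x ^ p * ω x ∂μ) ^ (1 / p) * (∫ x, g x ^ q * ω x ∂μ) ^ (1 / q) := by
  have hsplit : (fun x => f x * g x * ω x) =ᵐ[μ]
      fun x => f x * ω x ^ (1 / p) * (g x * ω x ^ (1 / q)) := by
    filter_upwards [hω0] with x hωx
    have hω_mul : ω x ^ (1 / p) * ω x ^ (1 / q) = ω x := by
      rw [← Real.rpow_add_of_nonneg hωx (one_div_nonneg.2 hpq.nonneg)
        (one_div_nonneg.2 hpq.symm.nonneg), one_div, one_div, hpq.inv_add_inv_eq_one,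
        Real.rpow_one]
    rw [mul_mul_mul_comm, hω_mul]
  have hpow {s : ℝ} {h : α → ℝ} (hs : s ≠ 0) (hh : 0 ≤ᵐ[μ] h) :
      (fun x => (h x * ω x ^ (1 / s)) ^ s) =ᵐ[μ] fun x => h x ^ s * ω x := by
    filter_upwards [hh, hω0] with x hhx hωx using mul_rpow_one_div_rpow hs hhx hωx
  rw [integral_congr_ae hsplit, ← integral_congr_ae (hpow hpq.ne_zero hf0),
    ← integral_congr_ae (hpow hpq.symm.ne_zero hg0)]
  refine integral_mul_le_Lp_mul_Lq_of_nonneg hpq ?_ ?_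
    (memLp_mul_rpow_one_div hpq.pos hf hω hf0 hω0 hfp)
    (memLp_mul_rpow_one_div hpq.symm.pos hg hω hg0 hω0 hgq)
  · filter_upwards [hf0, hω0] with x hfx hωx using mul_nonneg hfx (Real.rpow_nonneg hωx _)
  · filter_upwards [hg0, hω0] with x hgx hωx using mul_nonneg hgx (Real.rpow_nonneg hωx _)

end WeightedHolder

section RadialSobolev

/-- The area under the upper unit half-circle between the abscissae `0` and `x`. -/
noncomputable def circleArea (x : ℝ) : ℝ := ∫ y in (0 : ℝ)..x, √(1 - y ^ 2)

theorem hasDerivAt_circleArea (x : ℝ) : HasDerivAt circleArea (√(1 - x ^ 2)) x :=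
  ((by fun_prop : Continuous fun y : ℝ => √(1 - y ^ 2)).integral_hasStrictDerivAt 0 x).hasDerivAt

theorem circleArea_zero : circleArea 0 = 0 :=
  intervalIntegral.integral_same

theorem circleArea_one : circleArea 1 = Real.pi / 4 := by
  have hcont : Continuous fun y : ℝ => √(1 - y ^ 2) := by fun_prop
  have hsymm : ∫ y in (-1 : ℝ)..0, √(1 - y ^ 2) = circleArea 1 := by
    have := intervalIntegral.integral_comp_neg (a := 0) (b := 1) fun y : ℝ => √(1 - y ^ 2)
    simpa only [neg_sq, neg_zero, circleArea] using this.symm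
  have hhalf := intervalIntegral.integral_add_adjacent_intervals
    (hcont.intervalIntegrable (μ := volume) (-1) 0) (hcont.intervalIntegrable 0 1)
  rw [hsymm, integral_sqrt_one_sub_sq, ← circleArea] at hhalf
  linarith

theorem circleArea_le_self {x : ℝ} (hx : 0 ≤ x) : circleArea x ≤ x := by
  have hcont : Continuous fun y : ℝ => √(1 - y ^ 2) := by fun_prop
  have := intervalIntegral.integral_mono_on (μ := volume) hx (hcont.intervalIntegrable 0 x)
    (continuous_const.intervalIntegrable 0 x)
    (fun y _ => Real.sqrt_le_one.2 (sub_le_self 1 (sq_nonneg y)))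
  simpa [circleArea] using this

/-- A primitive of `(ε √(1 - (x / m)²) - 1) / 2`. Composed with `r ↦ r f(r)²`, where `ε = ±1` and
`m` is the maximum of that function, it calibrates the radial Sobolev inequality. -/
noncomputable def calibration (m ε x : ℝ) : ℝ := ε * (m / 2 * circleArea (x / m)) - x / 2

/-- The integrand of the radial Dirichlet energy minus `1 / (4 m²)` times the integrand of the
radial sixth-power norm. -/
noncomputable def sobolevDefect (m : ℝ) (f f' : ℝ → ℝ) (r : ℝ) : ℝ :=
  f' r ^ 2 * r ^ 2 - f r ^ 6 * r ^ 2 / (4 * m ^ 2)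

theorem hasDerivAt_calibration {m : ℝ} (hm : m ≠ 0) (ε x : ℝ) :
    HasDerivAt (calibration m ε) ((ε * √(1 - (x / m) ^ 2) - 1) / 2) x := by
  have harea : HasDerivAt (fun x => circleArea (x / m)) (√(1 - (x / m) ^ 2) * (1 / m)) x :=
    HasDerivAt.comp (h₂ := circleArea) x (hasDerivAt_circleArea (x / m))
      ((hasDerivAt_id x).div_const m)
  refine (((harea.const_mul (m / 2)).const_mul ε).sub ((hasDerivAt_id x).div_const 2)).congr_deriv
    ?_
  field_simp

theorem continuous_calibration {m : ℝ} (hm : m ≠ 0) (ε : ℝ) : Continuous (calibration m ε) :=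
  continuous_iff_continuousAt.2 fun x => (hasDerivAt_calibration hm ε x).continuousAt

theorem calibration_zero (m ε : ℝ) : calibration m ε 0 = 0 := by
  simp [calibration, circleArea_zero]

theorem calibration_self {m : ℝ} (hm : m ≠ 0) (ε : ℝ) :
    calibration m ε m = ε * (m * Real.pi / 8) - m / 2 := by
  rw [calibration, div_self hm, circleArea_one]
  ring

theorem calibration_one_nonpos {m x : ℝ} (hm : 0 < m) (hx : 0 ≤ x) : calibration m 1 x ≤ 0 := by
  have harea : m / 2 * circleArea (x / m) ≤ m / 2 * (x / m) := by
    gcongr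
    exact circleArea_le_self (by positivity)
  have hcancel : m / 2 * (x / m) = x / 2 := by field_simp
  rw [calibration]
  linarith

-- `y` and `p` are the values at `r` of a function and its derivative, and `s` is the signed square
-- root in the derivative of the calibration. The difference of the two sides is a square.
theorem calibrated_deriv_le {m r s y p : ℝ} (hm : m ≠ 0) (hs : s ^ 2 = 1 - (r * y ^ 2 / m) ^ 2) :
    (s - 1) / 2 * (y ^ 2 + r * (2 * y * p)) ≤ p ^ 2 * r ^ 2 - y ^ 6 * r ^ 2 / (4 * m ^ 2) := by
  have hpotential : y ^ 6 * r ^ 2 / (4 * m ^ 2) = (1 - s ^ 2) * y ^ 2 / 4 := by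
    rw [hs]
    field_simp
    ring
  rw [hpotential]
  nlinarith only [sq_nonneg (p * r + y / 2 - s * y / 2)]

variable {f f' : ℝ → ℝ}

theorem calibration_sub_le_integral_sobolevDefect {m ε b c : ℝ} (hm : 0 < m) (hε : ε ^ 2 = 1)
    (hb : 0 ≤ b) (hbc : b ≤ c) (hf : ContinuousOn f (Icc b c))
    (hf' : ∀ r ∈ Ioo b c, HasDerivAt f (f' r) r) (hle : ∀ r ∈ Ioo b c, r * f r ^ 2 ≤ m)
    (hint : IntegrableOn (sobolevDefect m f f') (Icc b c)) :
    calibration m ε (c * f c ^ 2) - calibration m ε (b * f b ^ 2) ≤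
      ∫ r in b..c, sobolevDefect m f f' r := by
  have hcont : ContinuousOn (fun r => calibration m ε (r * f r ^ 2)) (Icc b c) :=
    (continuous_calibration hm.ne' ε).comp_continuousOn (continuousOn_id.mul (hf.pow 2))
  have hderiv (r : ℝ) (hr : r ∈ Ioo b c) :
      HasDerivAt (fun r => calibration m ε (r * f r ^ 2))
        ((ε * √(1 - (r * f r ^ 2 / m) ^ 2) - 1) / 2 * (f r ^ 2 + r * (2 * f r * f' r))) r := by
    have hprofile : HasDerivAt (fun r => r * f r ^ 2) (f r ^ 2 + r * (2 * f r * f' r)) r := by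
      simpa using (hasDerivAt_id' r).fun_mul ((hf' r hr).fun_pow 2)
    exact (hasDerivAt_calibration hm.ne' ε _).comp r hprofile
  refine intervalIntegral.sub_le_integral_of_hasDeriv_right_of_le hbc hcont
    (fun r hr => (hderiv r hr).hasDerivWithinAt) hint fun r hr => calibrated_deriv_le hm.ne' ?_
  have hr0 : 0 ≤ r := hb.trans hr.1.le
  have hratio : (r * f r ^ 2 / m) ^ 2 ≤ 1 :=
    pow_le_one₀ (by positivity) ((div_le_one hm).2 (hle r hr))
  rw [mul_pow, hε, one_mul, Real.sq_sqrt (sub_nonneg.2 hratio)]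

variable {a : ℝ}

theorem pi_mul_div_four_le_integral_sobolevDefect {r₀ : ℝ} (ha : 0 ≤ a)
    (hf : ContinuousOn f (Ici a)) (hf' : ∀ r ∈ Ioi a, HasDerivAt f (f' r) r)
    (hlim : Tendsto (fun r => r * f r ^ 2) atTop (𝓝 0)) (hr₀ : a ≤ r₀)
    (hpos : 0 < r₀ * f r₀ ^ 2) (hmax : IsMaxOn (fun r => r * f r ^ 2) (Ici a) r₀)
    (hint : IntegrableOn (sobolevDefect (r₀ * f r₀ ^ 2) f f') (Ioi a)) :
    r₀ * f r₀ ^ 2 * Real.pi / 4 ≤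
      ∫ r in Ioi a, sobolevDefect (r₀ * f r₀ ^ 2) f f' r := by
  set m := r₀ * f r₀ ^ 2
  have hpiece (ε b c : ℝ) (hε : ε ^ 2 = 1) (hab : a ≤ b) (hbc : b ≤ c) :
      calibration m ε (c * f c ^ 2) - calibration m ε (b * f b ^ 2) ≤
        ∫ r in b..c, sobolevDefect m f f' r :=
    calibration_sub_le_integral_sobolevDefect hpos hε (ha.trans hab) hbc
      (hf.mono fun r hr => hab.trans hr.1) (fun r hr => hf' r (hab.trans_lt hr.1))
      (fun r hr => hmax (hab.trans hr.1.le))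
      ((integrableOn_Icc_iff_integrableOn_Ioc).2
        (hint.mono_set fun r hr => hab.trans_lt hr.1))
  have hinner : m * Real.pi / 8 - m / 2 ≤ ∫ r in a..r₀, sobolevDefect m f f' r := by
    have h_start : calibration m 1 (a * f a ^ 2) ≤ 0 :=
      calibration_one_nonpos hpos (by positivity)
    have h_end := calibration_self hpos.ne' 1
    linarith [hpiece 1 a r₀ (by norm_num) le_rfl hr₀]
  have hint_outer := hint.mono_set (Ioi_subset_Ioi hr₀)
  have houter : m * Real.pi / 8 + m / 2 ≤ ∫ r in Ioi r₀, sobolevDefect m f f' r := by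
    have h_end : Tendsto (fun R => calibration m (-1) (R * f R ^ 2)) atTop (𝓝 0) := by
      rw [← calibration_zero m (-1)]
      exact ((continuous_calibration hpos.ne' (-1)).tendsto 0).comp hlim
    have hle := le_of_tendsto_of_tendsto (h_end.sub_const (calibration m (-1) m))
      (intervalIntegral_tendsto_integral_Ioi r₀ hint_outer tendsto_id)
      ((eventually_ge_atTop r₀).mono fun R hR => hpiece (-1) r₀ R (by norm_num) hr₀ hR)
    rw [calibration_self hpos.ne'] at hle
    linarith
  rw [← intervalIntegral.integral_interval_add_Ioi hint hint_outer]
  linarith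

theorem exists_isMaxOn_Ici_of_tendsto_zero {v : ℝ → ℝ} (hv : ContinuousOn v (Ici a))
    (hlim : Tendsto v atTop (𝓝 0)) {r : ℝ} (hr : a ≤ r) (hpos : 0 < v r) :
    ∃ r₀, a ≤ r₀ ∧ 0 < v r₀ ∧ IsMaxOn v (Ici a) r₀ := by
  have hfar : ∀ᶠ x in cocompact ℝ ⊓ 𝓟 (Ici a), v x ≤ v r := by
    rw [cocompact_eq_atBot_atTop, inf_sup_right, eventually_sup]
    refine ⟨?_, ((hlim.eventually_lt_const hpos).mono fun _ => le_of_lt).filter_mono inf_le_left⟩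
    rw [eventually_inf_principal]
    filter_upwards [eventually_lt_atBot a] with x hxa hax using absurd hxa (not_lt.2 hax)
  obtain ⟨r₀, hr₀, hmax⟩ := hv.exists_isMaxOn' isClosed_Ici hr hfar
  exact ⟨r₀, hr₀, hpos.trans_le (hmax hr), hmax⟩

theorem twentySeven_mul_mul_sq_le_add_pow_three {x y : ℝ} (hx : 0 ≤ x) (hy : 0 ≤ y) :
    27 * (x * y ^ 2) ≤ (x + 2 * y) ^ 3 := by
  nlinarith [mul_nonneg hx (sq_nonneg (x - y)), mul_nonneg hy (sq_nonneg (x - y))]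

theorem radial_sobolev_Ioi (ha : 0 ≤ a) (hf : ContinuousOn f (Ici a))
    (hf' : ∀ r ∈ Ioi a, HasDerivAt f (f' r) r)
    (hlim : Tendsto (fun r => r * f r ^ 2) atTop (𝓝 0))
    (hE : IntegrableOn (fun r => f' r ^ 2 * r ^ 2) (Ioi a))
    (hJ : IntegrableOn (fun r => f r ^ 6 * r ^ 2) (Ioi a)) :
    27 / 256 * Real.pi ^ 2 * ∫ r in Ioi a, f r ^ 6 * r ^ 2 ≤
      (∫ r in Ioi a, f' r ^ 2 * r ^ 2) ^ 3 := by
  have hE0 : 0 ≤ ∫ r in Ioi a, f' r ^ 2 * r ^ 2 := integral_nonneg fun r => by positivity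
  by_cases hzero : ∀ r ∈ Ioi a, r * f r ^ 2 ≤ 0
  · have hJ_zero : ∫ r in Ioi a, f r ^ 6 * r ^ 2 = 0 := by
      refine setIntegral_eq_zero_of_forall_eq_zero fun r hr => ?_
      have hr0 : 0 < r := ha.trans_lt hr
      have hfr : f r = 0 := by
        by_contra hne
        exact (hzero r hr).not_gt (by positivity)
      simp [hfr]
    rw [hJ_zero, mul_zero]
    positivity
  push Not at hzero
  obtain ⟨r₁, hr₁, hpos₁⟩ := hzero
  obtain ⟨r₀, hr₀, hpos, hmax⟩ :=
    exists_isMaxOn_Ici_of_tendsto_zero (v := fun r => r * f r ^ 2)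
      (continuousOn_id.mul (hf.pow 2)) hlim (le_of_lt hr₁) hpos₁
  have hcal := pi_mul_div_four_le_integral_sobolevDefect ha hf hf' hlim hr₀ hpos hmax
    (hE.sub (hJ.div_const _))
  have hJ0 : 0 ≤ ∫ r in Ioi a, f r ^ 6 * r ^ 2 := integral_nonneg fun r => by positivity
  simp only [sobolevDefect, integral_sub hE (hJ.div_const _), integral_div] at hcal
  set m := r₀ * f r₀ ^ 2
  set E := ∫ r in Ioi a, f' r ^ 2 * r ^ 2
  set J := ∫ r in Ioi a, f r ^ 6 * r ^ 2
  calc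
    27 / 256 * Real.pi ^ 2 * J = 27 * (J / (4 * m ^ 2) * (m * Real.pi / 8) ^ 2) := by
      field_simp
      ring
    _ ≤ (J / (4 * m ^ 2) + 2 * (m * Real.pi / 8)) ^ 3 :=
      twentySeven_mul_mul_sq_le_add_pow_three (by positivity) (by positivity)
    _ ≤ E ^ 3 := by
      gcongr
      linarith

end RadialSobolev

theorem mul_pow_three_le_pow_five {c E J I : ℝ} (hc : 0 ≤ c) (hE : 0 ≤ E) (hJ : 0 ≤ J) (hI : 0 ≤ I)
    (hsobolev : c * J ≤ E ^ 3) (hholder : E ≤ J ^ (1 / (6 : ℝ)) * I ^ (1 / ((6 : ℝ) / 5))) :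
    c * E ^ 3 ≤ I ^ 5 := by
  rcases hE.eq_or_lt with rfl | hEpos
  · simpa using pow_nonneg hI 5
  have hsix : E ^ 6 ≤ J * I ^ 5 := by
    calc
      E ^ 6 ≤ (J ^ (1 / (6 : ℝ)) * I ^ (1 / ((6 : ℝ) / 5))) ^ 6 := by gcongr
      _ = J * I ^ 5 := by
        rw [mul_pow, ← Real.rpow_mul_natCast hJ, ← Real.rpow_mul_natCast hI]
        norm_num
  refine le_of_mul_le_mul_right ?_ (pow_pos hEpos 3)
  calc
    c * E ^ 3 * E ^ 3 = c * E ^ 6 := by ring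
    _ ≤ c * (J * I ^ 5) := by gcongr
    _ = I ^ 5 * (c * J) := by ring
    _ ≤ I ^ 5 * E ^ 3 := by gcongr

theorem potential_energy_bound_pow_three {I : ℝ} (hI : 0 ≤ I) :
    (2 / 3 * (2 * Real.pi ^ 2) ^ (-(2 : ℝ) / 3) * (4 * Real.pi) ^ ((2 : ℝ) / 3) *
      I ^ ((5 : ℝ) / 3)) ^ 3 = 32 / (27 * Real.pi ^ 2) * I ^ 5 := by
  have hpow {x : ℝ} (hx : 0 ≤ x) (n : ℤ) : (x ^ ((n : ℝ) / 3)) ^ 3 = x ^ n := by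
    rw [← Real.rpow_mul_natCast hx, ← Real.rpow_intCast]
    norm_num
  have h_neg_two := hpow (x := 2 * Real.pi ^ 2) (by positivity) (-2)
  have h_two := hpow (x := 4 * Real.pi) (by positivity) 2
  have h_five := hpow hI 5
  push_cast at h_neg_two h_two h_five
  rw [mul_pow, mul_pow, mul_pow, h_neg_two, h_two, h_five, zpow_neg]
  norm_cast
  field_simp
  ring

theorem half_mul_le_potential_energy_bound {E I : ℝ} (hI : 0 ≤ I)
    (hEI : 27 / 256 * Real.pi ^ 2 * E ^ 3 ≤ I ^ 5) :
    1 / 2 * E ≤ 2 / 3 * (2 * Real.pi ^ 2) ^ (-(2 : ℝ) / 3) * (4 * Real.pi) ^ ((2 : ℝ) / 3) *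
      I ^ ((5 : ℝ) / 3) := by
  refine le_of_pow_le_pow_left₀ three_ne_zero (by positivity) ?_
  rw [potential_energy_bound_pow_three hI]
  calc
    (1 / 2 * E) ^ 3 = 32 / (27 * Real.pi ^ 2) * (27 / 256 * Real.pi ^ 2 * E ^ 3) := by
      field_simp
      ring
    _ ≤ 32 / (27 * Real.pi ^ 2) * I ^ 5 := by gcongr

section Gravity

/-- The mass in the ball of radius `r` of a spherically symmetric distribution, up to the factor
`4π`. The radial mass density `w` includes the Jacobian: `w(z) = ρ(z) z²` for a density `ρ`. -/
noncomputable def enclosedMass (w : ℝ → ℝ) (r : ℝ) : ℝ := ∫ z in (0 : ℝ)..r, w z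

/-- The negative `-Φ` of the gravitational potential: `Φ' = G / r²` and `Φ → 0` at infinity, where
`G` is the enclosed mass. -/
noncomputable def radialPotential (w : ℝ → ℝ) (r : ℝ) : ℝ := ∫ s in Ioi r, enclosedMass w s / s ^ 2

variable {w : ℝ → ℝ} {a r : ℝ}

theorem enclosedMass_indicator_Ioi (ha : 0 ≤ a) (har : a ≤ r) :
    enclosedMass ((Ioi a).indicator w) r = ∫ z in a..r, w z := by
  rw [enclosedMass, intervalIntegral.integral_of_le (ha.trans har),
    intervalIntegral.integral_of_le har, setIntegral_indicator measurableSet_Ioi,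
    Ioc_inter_Ioi, sup_eq_right.2 ha]

theorem continuous_enclosedMass (hw : Integrable w) : Continuous (enclosedMass w) :=
  intervalIntegral.continuous_primitive (fun _ _ => hw.intervalIntegrable) 0

theorem absolutelyContinuousOnInterval_enclosedMass (hw : Integrable w) (b c : ℝ) :
    AbsolutelyContinuousOnInterval (enclosedMass w) b c := by
  have h := hw.intervalIntegrable (a := min 0 (min b c)) (b := max 0 (max b c))
    |>.absolutelyContinuousOnInterval_intervalIntegral (c := 0) (by simp)
  exact h.mono (uIcc_subset_uIcc (by simp) (by simp))

theorem enclosedMass_nonneg (hw0 : ∀ z, 0 ≤ w z) (hr : 0 ≤ r) : 0 ≤ enclosedMass w r :=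
  intervalIntegral.integral_nonneg hr fun z _ => hw0 z

theorem enclosedMass_le_integral (hw : Integrable w) (hw0 : ∀ z, 0 ≤ w z) (hr : 0 ≤ r) :
    enclosedMass w r ≤ ∫ z, w z := by
  rw [enclosedMass, intervalIntegral.integral_of_le hr]
  exact setIntegral_le_integral hw (ae_of_all _ hw0)

theorem enclosedMass_sq_le (hw : Integrable w) (hw0 : ∀ z, 0 ≤ w z) (hr : 0 ≤ r) :
    enclosedMass w r ^ 2 ≤ (∫ z, w z) ^ 2 :=
  pow_le_pow_left₀ (enclosedMass_nonneg hw0 hr) (enclosedMass_le_integral hw hw0 hr) 2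

theorem enclosedMass_eq_zero (ha : 0 ≤ a) (hwa : ∀ z ≤ a, w z = 0) (hr : r ≤ a) :
    enclosedMass w r = 0 := by
  refine (intervalIntegral.integral_congr fun z hz => hwa z ?_).trans intervalIntegral.integral_zero
  exact hz.2.trans (sup_le ha hr)

theorem integrable_enclosedMass_div_sq (ha : 0 < a) (hw : Integrable w) (hw0 : ∀ z, 0 ≤ w z)
    (hwa : ∀ z ≤ a, w z = 0) : Integrable fun s => enclosedMass w s / s ^ 2 := by
  refine IntegrableOn.integrable_of_forall_notMem_eq_zero (s := Ioi a) ?_ fun s hs => ?_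
  · refine integrableOn_mul_of_continuousOn_of_abs_le (C := ∫ z, w z) measurableSet_Ioi
      (continuous_enclosedMass hw).continuousOn (fun s hs => ?_) (integrableOn_Ioi_inv_sq ha)
    have hs0 : 0 ≤ s := (ha.trans hs).le
    rw [abs_of_nonneg (enclosedMass_nonneg hw0 hs0)]
    exact enclosedMass_le_integral hw hw0 hs0
  · rw [enclosedMass_eq_zero ha.le hwa (not_lt.1 hs), zero_div]

theorem radialPotential_eq_sub (hq : Integrable fun s => enclosedMass w s / s ^ 2) (b : ℝ) :
    radialPotential w = fun r => radialPotential w b - ∫ s in b..r, enclosedMass w s / s ^ 2 := by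
  funext r
  rw [eq_sub_iff_add_eq', radialPotential, radialPotential,
    intervalIntegral.integral_interval_add_Ioi hq.integrableOn hq.integrableOn]

theorem absolutelyContinuousOnInterval_radialPotential
    (hq : Integrable fun s => enclosedMass w s / s ^ 2) (b c : ℝ) :
    AbsolutelyContinuousOnInterval (radialPotential w) b c := by
  rw [radialPotential_eq_sub hq b]
  exact (LipschitzWith.const _).lipschitzOnWith.absolutelyContinuousOnInterval.sub
    (hq.intervalIntegrable.absolutelyContinuousOnInterval_intervalIntegral left_mem_uIcc)

theorem hasDerivAt_radialPotential (hw : Integrable w)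
    (hq : Integrable fun s => enclosedMass w s / s ^ 2) (hr : 0 < r) :
    HasDerivAt (radialPotential w) (-(enclosedMass w r / r ^ 2)) r := by
  have hcont : ContinuousAt (fun s => enclosedMass w s / s ^ 2) r :=
    (continuous_enclosedMass hw).continuousAt.div (by fun_prop) (by positivity)
  rw [radialPotential_eq_sub hq 0]
  exact (intervalIntegral.integral_hasDerivAt_right hq.intervalIntegrable
    hq.aestronglyMeasurable.stronglyMeasurableAtFilter hcont).const_sub _

theorem radialPotential_nonneg (hw0 : ∀ z, 0 ≤ w z) (hr : 0 ≤ r) : 0 ≤ radialPotential w r :=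
  setIntegral_nonneg measurableSet_Ioi fun _ hs =>
    div_nonneg (enclosedMass_nonneg hw0 (hr.trans (le_of_lt hs))) (sq_nonneg _)

theorem radialPotential_le_integral_div (hw : Integrable w) (hw0 : ∀ z, 0 ≤ w z)
    (hq : Integrable fun s => enclosedMass w s / s ^ 2) (hr : 0 < r) :
    radialPotential w r ≤ (∫ z, w z) / r := by
  rw [div_eq_mul_inv, ← integral_Ioi_inv_sq hr, ← integral_const_mul]
  refine setIntegral_mono_on hq.integrableOn ((integrableOn_Ioi_inv_sq hr).const_mul _)
    measurableSet_Ioi fun s hs => ?_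
  rw [div_eq_mul_inv]
  gcongr
  exact enclosedMass_le_integral hw hw0 (hr.trans hs).le

theorem continuousOn_radialPotential (hw : Integrable w)
    (hq : Integrable fun s => enclosedMass w s / s ^ 2) :
    ContinuousOn (radialPotential w) (Ioi 0) :=
  fun _ hr => (hasDerivAt_radialPotential hw hq hr).continuousAt.continuousWithinAt

theorem tendsto_mul_radialPotential_sq (hw : Integrable w) (hw0 : ∀ z, 0 ≤ w z)
    (hq : Integrable fun s => enclosedMass w s / s ^ 2) :
    Tendsto (fun r => r * radialPotential w r ^ 2) atTop (𝓝 0) := by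
  refine tendsto_atTop_zero_of_nonneg_of_le_div (a := 1) (C := (∫ z, w z) ^ 2)
    (fun r hr => ?_) fun r hr => ?_
  · have := one_pos.trans_le hr
    positivity
  · have hr0 := one_pos.trans_le hr
    have hf0 := radialPotential_nonneg hw0 hr0.le
    have hf_le := radialPotential_le_integral_div hw hw0 hq hr0
    calc r * radialPotential w r ^ 2 ≤ r * ((∫ z, w z) / r) ^ 2 := by gcongr
      _ = (∫ z, w z) ^ 2 / r := by field_simp

theorem integrableOn_enclosedMass_sq_div_sq (ha : 0 < a) (hw : Integrable w)
    (hw0 : ∀ z, 0 ≤ w z) : IntegrableOn (fun r => enclosedMass w r ^ 2 / r ^ 2) (Ioi a) := by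
  refine integrableOn_mul_of_continuousOn_of_abs_le (C := (∫ z, w z) ^ 2) measurableSet_Ioi
    ((continuous_enclosedMass hw).pow 2).continuousOn (fun r hr => ?_) (integrableOn_Ioi_inv_sq ha)
  rw [abs_of_nonneg (sq_nonneg _)]
  exact enclosedMass_sq_le hw hw0 (ha.trans hr).le

theorem integrableOn_enclosedMass_div_mul (ha : 0 < a) (hw : Integrable w) (hw0 : ∀ z, 0 ≤ w z) :
    IntegrableOn (fun r => enclosedMass w r / r * w r) (Ioi a) := by
  refine integrableOn_mul_of_continuousOn_of_abs_le (C := (∫ z, w z) / a) measurableSet_Ioi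
    ((continuous_enclosedMass hw).continuousOn.div continuousOn_id fun r hr => (ha.trans hr).ne')
    (fun r hr => ?_) hw.integrableOn
  have hr0 : 0 ≤ r := (ha.trans hr).le
  rw [abs_of_nonneg (div_nonneg (enclosedMass_nonneg hw0 hr0) hr0)]
  exact div_le_div₀ (integral_nonneg hw0) (enclosedMass_le_integral hw hw0 hr0) ha (le_of_lt hr)

theorem integrableOn_radialPotential_mul (ha : 0 < a) (hw : Integrable w) (hw0 : ∀ z, 0 ≤ w z)
    (hq : Integrable fun s => enclosedMass w s / s ^ 2) :
    IntegrableOn (fun r => radialPotential w r * w r) (Ioi a) := by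
  refine integrableOn_mul_of_continuousOn_of_abs_le (C := (∫ z, w z) / a) measurableSet_Ioi
    ((continuousOn_radialPotential hw hq).mono (Ioi_subset_Ioi ha.le)) (fun r hr => ?_)
    hw.integrableOn
  have hr0 : 0 < r := ha.trans hr
  rw [abs_of_nonneg (radialPotential_nonneg hw0 hr0.le)]
  exact (radialPotential_le_integral_div hw hw0 hq hr0).trans
    (div_le_div_of_nonneg_left (integral_nonneg hw0) ha (le_of_lt hr))

theorem integrableOn_radialPotential_pow_six (ha : 0 < a) (hw : Integrable w)
    (hw0 : ∀ z, 0 ≤ w z) (hq : Integrable fun s => enclosedMass w s / s ^ 2) :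
    IntegrableOn (fun r => radialPotential w r ^ 6 * r ^ 2) (Ioi a) := by
  have hbdd : IntegrableOn (fun r => radialPotential w r ^ 6 * r ^ 4 * (r ^ 2)⁻¹) (Ioi a) := by
    refine integrableOn_mul_of_continuousOn_of_abs_le (C := (∫ z, w z) ^ 6 / a ^ 2)
      measurableSet_Ioi ?_ (fun r hr => ?_) (integrableOn_Ioi_inv_sq ha)
    · exact (((continuousOn_radialPotential hw hq).mono (Ioi_subset_Ioi ha.le)).pow 6).mul
        (continuousOn_pow 4)
    have hr0 : 0 < r := ha.trans hr
    have hf0 := radialPotential_nonneg hw0 hr0.le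
    have hf_le := radialPotential_le_integral_div hw hw0 hq hr0
    have : 0 ≤ ∫ z, w z := integral_nonneg hw0
    have har : a ≤ r := le_of_lt hr
    rw [abs_of_nonneg (by positivity)]
    calc radialPotential w r ^ 6 * r ^ 4 ≤ ((∫ z, w z) / r) ^ 6 * r ^ 4 := by gcongr
      _ = (∫ z, w z) ^ 6 / r ^ 2 := by field_simp
      _ ≤ (∫ z, w z) ^ 6 / a ^ 2 := by gcongr
  refine hbdd.congr_fun (fun r hr => ?_) measurableSet_Ioi
  have hr0 : r ≠ 0 := (ha.trans hr).ne'
  field_simp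

theorem ae_hasDerivAt_enclosedMass (hw : Integrable w) :
    ∀ᵐ r, HasDerivAt (enclosedMass w) (w r) r :=
  (LocallyIntegrable.ae_hasDerivAt_integral hw.locallyIntegrable).mono fun _ hr => hr 0

theorem two_mul_integral_enclosedMass_div_mul (ha : 0 < a) (hw : Integrable w)
    (hw0 : ∀ z, 0 ≤ w z) (hwa : ∀ z ≤ a, w z = 0) :
    2 * ∫ r in Ioi a, enclosedMass w r / r * w r = ∫ r in Ioi a, enclosedMass w r ^ 2 / r ^ 2 := by
  have hE := integrableOn_enclosedMass_sq_div_sq ha hw hw0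
  have hV := (integrableOn_enclosedMass_div_mul ha hw hw0).const_mul 2
  have hac (b : ℝ) (hb : a ≤ b) :
      AbsolutelyContinuousOnInterval (fun r => enclosedMass w r * enclosedMass w r * r⁻¹) a b := by
    have hinv : AbsolutelyContinuousOnInterval (fun r : ℝ => r⁻¹) a b :=
      ContDiffOn.absolutelyContinuousOnInterval <| contDiffOn_id.inv fun r hr =>
        (ha.trans_le (uIcc_of_le hb ▸ hr).1).ne'
    have hG := absolutelyContinuousOnInterval_enclosedMass hw a b
    exact (hG.fun_mul hG).fun_mul hinv
  have hderiv : ∀ᵐ r, a < r →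
      HasDerivAt (fun r => enclosedMass w r * enclosedMass w r * r⁻¹)
        (2 * (enclosedMass w r / r * w r) - enclosedMass w r ^ 2 / r ^ 2) r := by
    filter_upwards [ae_hasDerivAt_enclosedMass hw] with r hr har
    have hr0 : r ≠ 0 := (ha.trans har).ne'
    refine ((hr.fun_mul hr).fun_mul (hasDerivAt_inv hr0)).congr_deriv ?_
    field_simp
    ring
  have hlim : Tendsto (fun r => enclosedMass w r * enclosedMass w r * r⁻¹) atTop (𝓝 0) := by
    refine tendsto_atTop_zero_of_nonneg_of_le_div (a := a) (C := (∫ z, w z) ^ 2)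
      (fun r hr => ?_) fun r hr => ?_
    · exact mul_nonneg (mul_self_nonneg _) (inv_nonneg.2 (ha.le.trans hr))
    · have hr0 := ha.le.trans hr
      rw [← sq, ← div_eq_mul_inv]
      exact div_le_div_of_nonneg_right (enclosedMass_sq_le hw hw0 hr0) hr0
  have hftc := integral_Ioi_of_absolutelyContinuousOnInterval hac hderiv (hV.sub hE) hlim
  rw [integral_sub hV hE, integral_const_mul, enclosedMass_eq_zero ha.le hwa le_rfl] at hftc
  linarith

theorem integral_radialPotential_mul (ha : 0 < a) (hw : Integrable w) (hw0 : ∀ z, 0 ≤ w z)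
    (hwa : ∀ z ≤ a, w z = 0) :
    ∫ r in Ioi a, radialPotential w r * w r = ∫ r in Ioi a, enclosedMass w r ^ 2 / r ^ 2 := by
  have hq := integrable_enclosedMass_div_sq ha hw hw0 hwa
  have hE := integrableOn_enclosedMass_sq_div_sq ha hw hw0
  have hV := integrableOn_radialPotential_mul ha hw hw0 hq
  have hderiv : ∀ᵐ r, a < r →
      HasDerivAt (fun r => radialPotential w r * enclosedMass w r)
        (radialPotential w r * w r - enclosedMass w r ^ 2 / r ^ 2) r := by
    filter_upwards [ae_hasDerivAt_enclosedMass hw] with r hr har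
    refine ((hasDerivAt_radialPotential hw hq (ha.trans har)).fun_mul hr).congr_deriv ?_
    ring
  have hlim : Tendsto (fun r => radialPotential w r * enclosedMass w r) atTop (𝓝 0) := by
    refine tendsto_atTop_zero_of_nonneg_of_le_div (a := a) (C := (∫ z, w z) * ∫ z, w z)
      (fun r hr => ?_) fun r hr => ?_
    · have hr0 := ha.le.trans hr
      exact mul_nonneg (radialPotential_nonneg hw0 hr0) (enclosedMass_nonneg hw0 hr0)
    · have hr0 := ha.trans_le hr
      rw [mul_div_right_comm]
      exact mul_le_mul (radialPotential_le_integral_div hw hw0 hq hr0)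
        (enclosedMass_le_integral hw hw0 hr0.le) (enclosedMass_nonneg hw0 hr0.le)
        (div_nonneg (integral_nonneg hw0) hr0.le)
  have hftc := integral_Ioi_of_absolutelyContinuousOnInterval
    (fun b _ => (absolutelyContinuousOnInterval_radialPotential hq a b).fun_mul
      (absolutelyContinuousOnInterval_enclosedMass hw a b)) hderiv (hV.sub hE) hlim
  rw [integral_sub hV hE, enclosedMass_eq_zero ha.le hwa le_rfl] at hftc
  linarith

theorem integral_radialPotential_pow_six_le (ha : 0 < a) (hw : Integrable w)
    (hw0 : ∀ z, 0 ≤ w z) (hwa : ∀ z ≤ a, w z = 0) :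
    27 / 256 * Real.pi ^ 2 * ∫ r in Ioi a, radialPotential w r ^ 6 * r ^ 2 ≤
      (∫ r in Ioi a, enclosedMass w r ^ 2 / r ^ 2) ^ 3 := by
  have hq := integrable_enclosedMass_div_sq ha hw hw0 hwa
  have hfield : EqOn (fun r => enclosedMass w r ^ 2 / r ^ 2)
      (fun r => (-(enclosedMass w r / r ^ 2)) ^ 2 * r ^ 2) (Ioi a) := fun r hr => by
    have hr0 : r ≠ 0 := (ha.trans hr).ne'
    field_simp
  rw [setIntegral_congr_fun measurableSet_Ioi hfield]
  exact radial_sobolev_Ioi ha.le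
    ((continuousOn_radialPotential hw hq).mono (Ici_subset_Ioi.2 ha))
    (fun r hr => hasDerivAt_radialPotential hw hq (ha.trans hr))
    (tendsto_mul_radialPotential_sq hw hw0 hq)
    ((integrableOn_enclosedMass_sq_div_sq ha hw hw0).congr_fun hfield measurableSet_Ioi)
    (integrableOn_radialPotential_pow_six ha hw hw0 hq)

theorem integral_radialPotential_mul_le (ha : 0 < a) (hw : Integrable w) (hw0 : ∀ z, 0 ≤ w z)
    (hwa : ∀ z ≤ a, w z = 0) {ρ : ℝ → ℝ}
    (hρ : AEStronglyMeasurable ρ (volume.restrict (Ioi a))) (hρ0 : ∀ r ∈ Ioi a, 0 ≤ ρ r)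
    (hwρ : ∀ r ∈ Ioi a, w r = ρ r * r ^ 2)
    (hI : IntegrableOn (fun r => ρ r ^ ((6 : ℝ) / 5) * r ^ 2) (Ioi a)) :
    ∫ r in Ioi a, radialPotential w r * w r ≤
      (∫ r in Ioi a, radialPotential w r ^ 6 * r ^ 2) ^ (1 / (6 : ℝ)) *
        (∫ r in Ioi a, ρ r ^ ((6 : ℝ) / 5) * r ^ 2) ^ (1 / ((6 : ℝ) / 5)) := by
  have hq := integrable_enclosedMass_div_sq ha hw hw0 hwa
  have hconj : (6 : ℝ).HolderConjugate (6 / 5) := by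
    rw [Real.holderConjugate_iff]
    norm_num
  have hholder := integral_mul_mul_weight_le_rpow_mul_rpow (μ := volume.restrict (Ioi a))
    (f := radialPotential w) (g := ρ) (ω := fun r => r ^ 2) hconj
    (((continuousOn_radialPotential hw hq).mono (Ioi_subset_Ioi ha.le)).aestronglyMeasurable
      measurableSet_Ioi)
    hρ (by fun_prop)
    (ae_restrict_of_forall_mem measurableSet_Ioi fun r hr =>
      radialPotential_nonneg hw0 (ha.trans hr).le)
    (ae_restrict_of_forall_mem measurableSet_Ioi hρ0)
    (ae_of_all _ fun r => sq_nonneg r)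
    (by simpa only [Real.rpow_ofNat, IntegrableOn] using
      integrableOn_radialPotential_pow_six ha hw hw0 hq) hI
  have hmass : EqOn (fun r => radialPotential w r * w r)
      (fun r => radialPotential w r * ρ r * r ^ 2) (Ioi a) := fun r hr => by
    simp only [hwρ r hr, mul_assoc]
  rw [setIntegral_congr_fun measurableSet_Ioi hmass]
  simpa only [Real.rpow_ofNat] using hholder

theorem half_mul_integral_enclosedMass_sq_div_sq_le (ha : 0 < a) (hw : Integrable w)
    (hw0 : ∀ z, 0 ≤ w z) (hwa : ∀ z ≤ a, w z = 0) {ρ : ℝ → ℝ}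
    (hρ : AEStronglyMeasurable ρ (volume.restrict (Ioi a))) (hρ0 : ∀ r ∈ Ioi a, 0 ≤ ρ r)
    (hwρ : ∀ r ∈ Ioi a, w r = ρ r * r ^ 2)
    (hI : IntegrableOn (fun r => ρ r ^ ((6 : ℝ) / 5) * r ^ 2) (Ioi a)) :
    1 / 2 * ∫ r in Ioi a, enclosedMass w r ^ 2 / r ^ 2 ≤
      2 / 3 * (2 * Real.pi ^ 2) ^ (-(2 : ℝ) / 3) * (4 * Real.pi) ^ ((2 : ℝ) / 3) *
        (∫ r in Ioi a, ρ r ^ ((6 : ℝ) / 5) * r ^ 2) ^ ((5 : ℝ) / 3) := by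
  have hI0 : 0 ≤ ∫ r in Ioi a, ρ r ^ ((6 : ℝ) / 5) * r ^ 2 :=
    setIntegral_nonneg measurableSet_Ioi fun r hr =>
      mul_nonneg (Real.rpow_nonneg (hρ0 r hr) _) (sq_nonneg r)
  have hholder := integral_radialPotential_mul_le ha hw hw0 hwa hρ hρ0 hwρ hI
  rw [integral_radialPotential_mul ha hw hw0 hwa] at hholder
  exact half_mul_le_potential_energy_bound hI0 <|
    mul_pow_three_le_pow_five (by positivity) (integral_nonneg fun r => by positivity)
      (integral_nonneg fun r => by positivity) hI0
      (integral_radialPotential_pow_six_le ha hw hw0 hwa) hholder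

end Gravity

theorem radial_potential_energy_estimate
    (a : ℝ) (ha : 0 < a) (ρ : ℝ → ℝ)
    (hmeas : Measurable ρ)
    (hnn : ∀ r : ℝ, a ≤ r → 0 ≤ ρ r)
    (h1 : IntegrableOn (fun r => ρ r * r ^ 2) (Ioi a))
    (h2 : IntegrableOn (fun r => ρ r ^ ((6:ℝ)/5) * r ^ 2) (Ioi a))
    (G : ℝ → ℝ)
    (hG : ∀ r : ℝ, G r = ∫ z in a..r, ρ z * z ^ 2) :
    (∫ r in Ioi a, G r * ρ r * r) = 1/2 * ∫ r in Ioi a, G r ^ 2 / r ^ 2 ∧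
    (∫ r in Ioi a, G r * ρ r * r) ≤
      2/3 * (2 * Real.pi ^ 2) ^ (-(2:ℝ)/3) * (4 * Real.pi) ^ ((2:ℝ)/3) *
        (∫ r in Ioi a, ρ r ^ ((6:ℝ)/5) * r ^ 2) ^ ((5:ℝ)/3) := by
  have hρ0 : ∀ r ∈ Ioi a, 0 ≤ ρ r := fun r hr => hnn r (le_of_lt hr)
  set w : ℝ → ℝ := (Ioi a).indicator fun r => ρ r * r ^ 2
  have hwρ : ∀ r ∈ Ioi a, w r = ρ r * r ^ 2 := fun r hr => indicator_of_mem hr _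
  have hw : Integrable w := (integrable_indicator_iff measurableSet_Ioi).2 h1
  have hw0 : ∀ r, 0 ≤ w r := indicator_nonneg fun r hr => mul_nonneg (hρ0 r hr) (sq_nonneg r)
  have hwa : ∀ r ≤ a, w r = 0 := fun r hr => indicator_of_notMem (not_lt.2 hr) _
  have hGw : ∀ r ∈ Ioi a, G r = enclosedMass w r := fun r hr => by
    rw [hG, enclosedMass_indicator_Ioi ha.le (le_of_lt hr)]
  have hself : ∫ r in Ioi a, G r * ρ r * r = ∫ r in Ioi a, enclosedMass w r / r * w r :=
    setIntegral_congr_fun measurableSet_Ioi fun r hr => by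
      have hr0 : r ≠ 0 := (ha.trans hr).ne'
      simp only [hGw r hr, hwρ r hr]
      field_simp
  have hfield : ∫ r in Ioi a, G r ^ 2 / r ^ 2 = ∫ r in Ioi a, enclosedMass w r ^ 2 / r ^ 2 :=
    setIntegral_congr_fun measurableSet_Ioi fun r hr => by simp only [hGw r hr]
  have hidentity : ∫ r in Ioi a, G r * ρ r * r = 1 / 2 * ∫ r in Ioi a, G r ^ 2 / r ^ 2 := by
    rw [hself, hfield, ← two_mul_integral_enclosedMass_div_mul ha hw hw0 hwa, one_div,
      inv_mul_cancel_left₀ two_ne_zero]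
  refine ⟨hidentity, ?_⟩
  rw [hidentity, hfield]
  exact half_mul_integral_enclosedMass_sq_div_sq_le ha hw hw0 hwa hmeas.aestronglyMeasurable hρ0
    hwρ h2
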